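/- Let n ≥ 3 and let H be a group containing Aut(F_n), i.e., such that there exists an injective group homomorphism from Aut(F_n) into H. Then H is not linear: for every field K and every natural number d, there is no injective group homomorphism from H into the general linear group GL_d(K). -/

import Mathlib

namespace NL
open Module Polynomial

section part1
universe u v
variable {E : Type v} [Field E]

lemma charpoly_isCompl {V : Type u} [AddCommGroup V] [Module E V] [FiniteDimensional E V]
    {p q : Submodule E V} (h : IsCompl p q) (T : End E V)
    (hp : ∀ x ∈ p, T x ∈ p) (hq : ∀ x ∈ q, T x ∈ q) :
    T.charpoly = (T.restrict hp).charpoly * (T.restrict hq).charpoly := by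
  let e := Submodule.prodEquivOfIsCompl p q h
  have hψ : (T.restrict hp).prodMap (T.restrict hq) = e.symm.conj T := by
    apply LinearMap.ext
    rintro ⟨x, y⟩
    rw [LinearEquiv.conj_apply]
    simp only [LinearEquiv.symm_symm, LinearMap.comp_apply, LinearEquiv.coe_coe]
    rw [LinearEquiv.eq_symm_apply]
    simp only [e, Submodule.coe_prodEquivOfIsCompl', LinearMap.prodMap_apply,
      LinearMap.coe_restrict_apply, map_add]
  rw [← e.symm.charpoly_conj T, ← hψ, LinearMap.charpoly_prodMap]

lemma maxGen_add_le {V : Type u} [AddCommGroup V] [Module E V]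
    (S N : End E V) (h : Commute S N) (hN : IsNilpotent N) (μ : E) :
    S.maxGenEigenspace μ ≤ (S + N).maxGenEigenspace μ := by
  intro x hx
  have h2 : x ∈ N.maxGenEigenspace 0 := by
    obtain ⟨k, hk⟩ := hN
    rw [Module.End.mem_maxGenEigenspace]
    exact ⟨k, by simp [hk]⟩
  have := Module.End.genEigenspace_inf_le_add S N μ 0 ⊤ ⊤ h ⟨hx, h2⟩
  simpa using this

lemma maxGen_add {V : Type u} [AddCommGroup V] [Module E V]
    (S N : End E V) (h : Commute S N) (hN : IsNilpotent N) (μ : E) :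
    (S + N).maxGenEigenspace μ = S.maxGenEigenspace μ := by
  apply le_antisymm _ (maxGen_add_le S N h hN μ)
  have := maxGen_add_le (S + N) (-N) ((h.add_left (Commute.refl N)).neg_right) hN.neg μ
  simpa using this

lemma maxGen_smul {V : Type u} [AddCommGroup V] [Module E V]
    (S : End E V) {b : E} (hb : b ≠ 0) (μ : E) :
    (b • S).maxGenEigenspace (b * μ) = S.maxGenEigenspace μ := by
  apply le_antisymm
  · have := Module.End.genEigenspace_le_smul (b • S) (b * μ) b⁻¹ ⊤
    rwa [smul_smul, ← mul_assoc, inv_mul_cancel₀ hb, one_smul, one_mul] at this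
  · exact Module.End.genEigenspace_le_smul S μ b ⊤

lemma roots_mul {V : Type u} [AddCommGroup V] [Module E V] [FiniteDimensional E V]
    (A B : End E V) (h : Commute A B) {b : E} (hb : b ≠ 0)
    (hB : IsNilpotent (B - algebraMap E (End E V) b)) :
    (A * B).charpoly.roots = A.charpoly.roots.map (b * ·) := by
  classical
  have key : ∀ μ, (A * B).charpoly.rootMultiplicity (b * μ) = A.charpoly.rootMultiplicity μ := by
    intro μ
    rw [← LinearMap.finrank_maxGenEigenspace_eq, ← LinearMap.finrank_maxGenEigenspace_eq]
    have hc : Commute A (B - algebraMap E (End E V) b) :=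
      h.sub_right (Algebra.commutes b A).symm
    have e : A * B = b • A + A * (B - algebraMap E (End E V) b) := by
      rw [mul_sub, ← Algebra.commutes, ← Algebra.smul_def]; abel
    rw [e, maxGen_add _ _ _ (hc.isNilpotent_mul_left hB), maxGen_smul _ hb]
    exact ((Commute.refl A).mul_right hc).smul_left b
  ext μ
  obtain ⟨ν, rfl⟩ : ∃ ν, b * ν = μ := ⟨b⁻¹ * μ, by field_simp⟩
  rw [Multiset.count_map_eq_count' _ _ (mul_right_injective₀ hb), count_roots, count_roots, key]

/-- restriction of a representation to an invariant subspace -/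
def restrictHom {G : Type*} [Group G] {V : Type u} [AddCommGroup V] [Module E V]
    (A : G →* End E V) (p : Submodule E V) (hp : ∀ g, ∀ x ∈ p, A g x ∈ p) : G →* End E p where
  toFun g := (A g).restrict (hp g)
  map_one' := by ext; simp
  map_mul' := by intros; ext; simp

lemma det_comm {G : Type*} [Group G] {V : Type u} [AddCommGroup V] [Module E V]
    (A : G →* End E V) (g : G) (hg : g ∈ commutator G) : LinearMap.det (A g) = 1 := by
  let D : G →* Eˣ := ((LinearMap.det : End E V →* E).comp A).toHomUnits
  have : g ∈ D.ker := Abelianization.commutator_subset_ker D hg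
  have h2 : D g = 1 := this
  have := congrArg Units.val h2
  simpa [D] using this

theorem moment [IsAlgClosed E] {G : Type*} [Group G] (l : E → ℚ)
    (hl : ∀ a b, a ≠ 0 → b ≠ 0 → l (a * b) = l a + l b) (g : G) (hg : g ∈ commutator G) :
    ∀ (n : ℕ) (V : Type u) [AddCommGroup V] [Module E V] [FiniteDimensional E V]
    (_ : finrank E V = n) (A : G →* End E V) (B : End E V) (_ : ∀ h, Commute (A h) B)
    (_ : Function.Injective B),
    ((A g * B).charpoly.roots.map (fun x => l x ^ 2)).sum =
      ((A g).charpoly.roots.map (fun x => l x ^ 2)).sum +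
      (B.charpoly.roots.map (fun x => l x ^ 2)).sum := by
  have l1 : l 1 = 0 := by
    have := hl 1 1 one_ne_zero one_ne_zero
    simp at this; exact this
  have lprod : ∀ s : Multiset E, (∀ x ∈ s, x ≠ 0) → l s.prod = (s.map l).sum := by
    intro s
    induction s using Multiset.induction_on with
    | empty => simp [l1]
    | cons a s ih =>
      intro h
      simp only [Multiset.mem_cons, forall_eq_or_imp] at h
      rw [Multiset.prod_cons, hl _ _ h.1 (Multiset.prod_ne_zero fun h0 => h.2 0 h0 rfl), ih h.2]
      simp
  -- the base case
  have base : ∀ (V : Type u) [AddCommGroup V] [Module E V] [FiniteDimensional E V]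
      (A : G →* End E V) (B : End E V) (_ : ∀ h, Commute (A h) B) (b : E) (_ : b ≠ 0)
      (_ : IsNilpotent (B - algebraMap E (End E V) b)),
      ((A g * B).charpoly.roots.map (fun x => l x ^ 2)).sum =
      ((A g).charpoly.roots.map (fun x => l x ^ 2)).sum +
      (B.charpoly.roots.map (fun x => l x ^ 2)).sum := by
    intro V _ _ _ A B hAB b hb hB
    have hdet : (A g).charpoly.roots.prod = 1 := by
      rw [← Module.End.det_eq_prod_roots_charpoly_of_splits (IsAlgClosed.splits _), det_comm A g hg]
    have hne : ∀ x ∈ (A g).charpoly.roots, x ≠ 0 := by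
      rintro x hx rfl
      rw [Multiset.prod_eq_zero hx] at hdet
      exact zero_ne_one hdet
    have hsum := lprod _ hne
    rw [hdet, l1] at hsum
    have hcard : ∀ T : End E V, Multiset.card T.charpoly.roots = finrank E V := by
      intro T
      rw [← LinearMap.charpoly_natDegree T]
      exact (splits_iff_card_roots.1 (IsAlgClosed.splits _))
    have hBr : B.charpoly.roots = Multiset.replicate (finrank E V) b := by
      have := roots_mul 1 B (Commute.one_left B) hb hB
      rw [one_mul] at this
      rw [this]
      have h1 : (1 : End E V).charpoly.roots = Multiset.replicate (finrank E V) 1 := by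
        rw [LinearMap.charpoly_one, roots_pow, ← C_1, roots_X_sub_C, Multiset.nsmul_singleton]
      rw [h1]; simp
    rw [roots_mul _ B (hAB g) hb hB, hBr, Multiset.map_map, ← hcard (A g)]
    simp only [Function.comp_def]
    rw [Multiset.map_congr rfl (g := fun x => l x ^ 2 + (2 * l b * l x + l b ^ 2))]
    · rw [Multiset.sum_map_add, Multiset.sum_map_add, Multiset.sum_map_mul_left, ← hsum]
      simp
    · intro x hx
      rw [hl _ _ hb (hne x hx)]; ring
  intro n
  induction n using Nat.strong_induction_on with
  | _ n ih =>
  intro V _ _ _ hn A B hAB hB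
  rcases subsingleton_or_nontrivial V with hV | hV
  · have : ∀ T : End E V, T.charpoly.roots = 0 := by
      intro T
      rw [← Multiset.card_eq_zero]
      have h1 := T.charpoly.card_roots'
      rw [LinearMap.charpoly_natDegree, finrank_zero_of_subsingleton] at h1
      omega
    simp [this]
  obtain ⟨b, hb⟩ := Module.End.exists_eigenvalue B
  obtain ⟨v, hv⟩ := hb.exists_hasEigenvector
  have hb0 : b ≠ 0 := by
    rintro rfl
    apply hv.2
    apply hB
    rw [hv.apply_eq_smul]; simp
  set f : End E V := B - algebraMap E (End E V) b with hf
  obtain ⟨k, hk, hk1⟩ := (f.eventually_isCompl_ker_pow_range_pow.and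
    (Filter.eventually_ge_atTop 1)).exists
  have hker : ∀ T : End E V, Commute T f → ∀ x ∈ LinearMap.ker (f ^ k), T x ∈ LinearMap.ker (f ^ k) := by
    intro T hT x hx
    rw [LinearMap.mem_ker] at hx ⊢
    rw [← Module.End.mul_apply, ← (hT.pow_right k).eq, Module.End.mul_apply, hx, map_zero]
  have hran : ∀ T : End E V, Commute T f → ∀ x ∈ LinearMap.range (f ^ k), T x ∈ LinearMap.range (f ^ k) := by
    rintro T hT _ ⟨x, rfl⟩
    exact ⟨T x, by rw [← Module.End.mul_apply, ← (hT.pow_right k).eq, Module.End.mul_apply]⟩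
  have hAf : ∀ h, Commute (A h) f := fun h => (hAB h).sub_right (Algebra.commutes b (A h)).symm
  have hBf : Commute B f := (Commute.refl B).sub_right (Algebra.commutes b B).symm
  have hABf : Commute (A g * B) f := (hAf g).mul_left hBf
  have hroots : ∀ T : End E V, ∀ hT : Commute T f, T.charpoly.roots =
      (T.restrict (hker T hT)).charpoly.roots + (T.restrict (hran T hT)).charpoly.roots := by
    intro T hT
    rw [charpoly_isCompl hk T (hker T hT) (hran T hT),
      Polynomial.roots_mul (mul_ne_zero (LinearMap.charpoly_monic _).ne_zero
        (LinearMap.charpoly_monic _).ne_zero)]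
  rw [hroots _ hABf, hroots _ (hAf g), hroots _ hBf]
  have h1 := base (LinearMap.ker (f ^ k)) (restrictHom A _ fun h => hker _ (hAf h))
    (B.restrict (hker _ hBf)) (fun h => by
      ext x
      have := congrArg (fun T : End E V => T x) (hAB h).eq
      simpa [restrictHom] using this) b hb0 ⟨k, by
        ext x
        have : (B.restrict (hker _ hBf)) - algebraMap E (End E _) b = f.restrict (hker f (Commute.refl f)) := by
          ext y; simp [hf]
        rw [this, Module.End.pow_restrict]
        simp⟩
  have h2 := ih (finrank E (LinearMap.range (f ^ k))) (by
      have := LinearMap.finrank_range_add_finrank_ker (f ^ k)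
      have : 0 < finrank E (LinearMap.ker (f ^ k)) := by
        have : Nontrivial (LinearMap.ker (f ^ k)) := by
          refine ⟨⟨⟨v, ?_⟩, 0, ?_⟩⟩
          · have hfv : f v = 0 := by simp [hf, hv.apply_eq_smul]
            obtain ⟨j, rfl⟩ := Nat.exists_eq_add_of_le' hk1
            rw [LinearMap.mem_ker, pow_succ, Module.End.mul_apply, hfv, map_zero]
          · intro h
            exact hv.2 (congrArg Subtype.val h)
        exact finrank_pos
      omega) (LinearMap.range (f ^ k)) rfl (restrictHom A _ fun h => hran _ (hAf h))
    (B.restrict (hran _ hBf)) (fun h => by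
      ext x
      have := congrArg (fun T : End E V => T x) (hAB h).eq
      simpa [restrictHom] using this) (by
      intro x y hxy
      apply Subtype.ext
      apply hB
      simpa using congrArg Subtype.val hxy)
  have e1 : (A g * B).restrict (hker _ hABf) =
    restrictHom A _ (fun h => hker _ (hAf h)) g * (B.restrict (hker _ hBf)) := by
    ext; simp [restrictHom]
  have e2 : (A g * B).restrict (hran _ hABf) =
    restrictHom A _ (fun h => hran _ (hAf h)) g * (B.restrict (hran _ hBf)) := by
    ext; simp [restrictHom]
  rw [e1, e2]
  simp only [Multiset.map_add, Multiset.sum_add]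
  rw [h1, h2]
  simp only [restrictHom, MonoidHom.coe_mk, OneHom.coe_mk]
  ring

lemma exists_hom {M : Type u} [AddCommGroup M] (a : M) (ha : ∀ n : ℤ, n • a = 0 → n = 0) :
    ∃ l : M →+ ℚ, l a ≠ 0 := by
  obtain ⟨l, hl⟩ := (Module.Baer.of_divisible ℚ).extension_property_addMonoidHom
    (zmultiplesHom M a) ((injective_iff_map_eq_zero _).2 (by simpa using ha))
    (Int.castAddHom ℚ)
  refine ⟨l, ?_⟩
  have := congrArg (fun f : ℤ →+ ℚ => f 1) hl
  simp at this
  rw [this]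
  exact one_ne_zero

theorem torsion_roots [IsAlgClosed E] {G : Type*} [Group G] {d : ℕ}
    (A B : G →* Matrix.GeneralLinearGroup (Fin d) E) (T : Matrix.GeneralLinearGroup (Fin d) E)
    (hcomm : ∀ g h, Commute (A g) (B h)) (hconj : ∀ g, T⁻¹ * B g * T = A g * B g)
    (g : G) (hg : g ∈ commutator G) :
    ∀ x ∈ (A g).val.charpoly.roots, ∃ m : ℕ, 0 < m ∧ x ^ m = 1 := by
  intro x hx
  have hx0 : x ≠ 0 := by
    rintro rfl
    have : (A g).val.det = 0 := by
      rw [Matrix.det_eq_prod_roots_charpoly]; exact Multiset.prod_eq_zero hx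
    have h2 : IsUnit (A g).val.det := (Matrix.isUnit_iff_isUnit_det _).1 (A g).isUnit
    rw [this] at h2
    exact not_isUnit_zero h2
  by_contra hcon
  push Not at hcon
  obtain ⟨l', hl'⟩ := exists_hom (Additive.ofMul (Units.mk0 x hx0)) (by
    intro n hn
    by_contra hn0
    apply hcon n.natAbs (Int.natAbs_pos.2 hn0)
    have h1 : (Units.mk0 x hx0) ^ n = 1 := by
      simpa using congrArg Additive.toMul hn
    have h2 : (Units.mk0 x hx0) ^ n.natAbs = 1 := by
      rcases Int.natAbs_eq n with h | h
      · rw [h] at h1; simpa using h1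
      · rw [h] at h1; simpa using h1
    simpa using congrArg Units.val h2)
  classical
  let l : E → ℚ := fun y => if h : y = 0 then 0 else l' (Additive.ofMul (Units.mk0 y h))
  have hl : ∀ a b, a ≠ 0 → b ≠ 0 → l (a * b) = l a + l b := by
    intro a b ha hb
    simp only [l, ha, hb, mul_eq_zero, or_self, dite_false]
    rw [← map_add, ← ofMul_mul]
    congr 2
    ext; simp
  let e : Matrix (Fin d) (Fin d) E ≃ₐ[E] End E (Fin d → E) := Matrix.toLinAlgEquiv'
  let A' : G →* End E (Fin d → E) :=
    (e : Matrix (Fin d) (Fin d) E →* End E (Fin d → E)).comp ((Units.coeHom _).comp A)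
  have hch : ∀ M : Matrix (Fin d) (Fin d) E, LinearMap.charpoly (e M) = M.charpoly := by
    intro M
    exact Matrix.charpoly_toLin' M
  have key := moment l hl g hg _ (Fin d → E) rfl A' (e (B g).val) (by
    intro h
    have := congrArg Units.val (hcomm h g).eq
    have := congrArg e this
    rw [commute_iff_eq]
    simpa [A'] using this) (by
    have hu : IsUnit (e (B g).val) := (B g).isUnit.map e
    exact ((Module.End.isUnit_iff _).1 hu).1)
  have e1 : A' g = e (A g).val := rfl
  rw [e1, ← map_mul, hch, hch, hch] at key
  have e2 : ((A g).val * (B g).val).charpoly = (B g).val.charpoly := by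
    have := congrArg Units.val (hconj g)
    simp only [Units.val_mul] at this
    rw [← this, Matrix.coe_units_inv, Matrix.charpoly_units_conj']
  rw [e2] at key
  have hs : ((A g).val.charpoly.roots.map (fun x => l x ^ 2)).sum = 0 := by linarith
  have := Multiset.single_le_sum (s := (A g).val.charpoly.roots.map (fun x => l x ^ 2))
    (by simp only [Multiset.mem_map]; rintro _ ⟨y, _, rfl⟩; positivity) (l x ^ 2)
    (Multiset.mem_map_of_mem _ hx)
  rw [hs] at this
  have : l x = 0 := by
    have := le_antisymm this (sq_nonneg _)
    simpa using this
  apply hl'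
  simpa [l, hx0] using this

end part1
end NL

namespace NL
open Module Polynomial

section part2
universe v
variable {E : Type v} [Field E]

lemma exists_unip [IsAlgClosed E] {d : ℕ} (M : Matrix (Fin d) (Fin d) E)
    (h : ∀ x ∈ M.charpoly.roots, ∃ m : ℕ, 0 < m ∧ x ^ m = 1) :
    ∃ m : ℕ, 0 < m ∧ IsNilpotent (M ^ m - 1) := by
  have key : ∀ s : Multiset E, (∀ x ∈ s, ∃ m : ℕ, 0 < m ∧ x ^ m = 1) →
      ∃ m : ℕ, 0 < m ∧ ∀ x ∈ s, x ^ m = 1 := by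
    intro s
    induction s using Multiset.induction_on with
    | empty => intro _; exact ⟨1, one_pos, by simp⟩
    | cons a s ih =>
      intro h
      obtain ⟨m, hm, hm'⟩ := ih fun x hx => h x (Multiset.mem_cons_of_mem hx)
      obtain ⟨k, hk, hk'⟩ := h a (Multiset.mem_cons_self a s)
      refine ⟨k * m, Nat.mul_pos hk hm, ?_⟩
      intro x hx
      rcases Multiset.mem_cons.1 hx with rfl | hx
      · rw [pow_mul, hk', one_pow]
      · rw [mul_comm, pow_mul, hm' x hx, one_pow]
  obtain ⟨m, hm, hm'⟩ := key _ h
  refine ⟨m, hm, Multiset.card M.charpoly.roots, ?_⟩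
  have hdvd : ∀ s : Multiset E, (∀ x ∈ s, x ^ m = 1) →
      (s.map fun a => X - C a).prod ∣ ((X ^ m - 1 : E[X]) ^ Multiset.card s) := by
    intro s
    induction s using Multiset.induction_on with
    | empty => simp
    | cons a s ih =>
      intro h
      rw [Multiset.map_cons, Multiset.prod_cons, Multiset.card_cons, pow_succ']
      apply mul_dvd_mul _ (ih fun x hx => h x (Multiset.mem_cons_of_mem hx))
      rw [dvd_iff_isRoot]
      simp [h a (Multiset.mem_cons_self a s)]
  have h1 := hdvd _ hm'
  rw [← (IsAlgClosed.splits M.charpoly).eq_prod_roots_of_monic M.charpoly_monic] at h1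
  obtain ⟨q, hq⟩ := h1
  have := congrArg (aeval M) hq
  rw [map_mul, Matrix.aeval_self_charpoly, zero_mul] at this
  simpa using this

lemma bounded_const : ∀ (D : ℕ) (c : ℕ → ℂ) (_ : ∃ C : ℝ, ∀ k, ‖c k‖ ≤ C)
    (_ : (fwdDiff 1)^[D + 1] c = 0), ∀ k, c (k + 1) = c k := by
  intro D
  induction D with
  | zero =>
    intro c _ h k
    have := congrFun h k
    simpa [fwdDiff, sub_eq_zero] using this
  | succ D ih =>
    rintro c ⟨C, hC⟩ h
    have h1 := ih (fwdDiff 1 c) ⟨C + C, fun k => (norm_sub_le _ _).trans (add_le_add (hC _) (hC _))⟩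
      (by rw [← Function.iterate_succ_apply]; exact h)
    have h2 : ∀ k, c (k + 1) - c k = fwdDiff 1 c 0 := by
      intro k
      induction k with
      | zero => simp [fwdDiff]
      | succ k ihk => rw [← ihk]; exact h1 k
    set δ := fwdDiff 1 c 0
    have h3 : ∀ k : ℕ, c k = c 0 + k * δ := by
      intro k
      induction k with
      | zero => simp
      | succ k ihk =>
        have := h2 k
        push_cast
        linear_combination this + ihk
    have h4 : δ = 0 := by
      by_contra hδ
      have hpos : 0 < ‖δ‖ := norm_pos_iff.2 hδ
      obtain ⟨k, hk⟩ := exists_nat_gt ((C + C) / ‖δ‖)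
      rw [div_lt_iff₀ hpos] at hk
      have e : (k : ℂ) * δ = c k - c 0 := by rw [h3 k]; ring
      have : ‖(k : ℂ) * δ‖ ≤ C + C := by
        rw [e]; exact (norm_sub_le _ _).trans (add_le_add (hC _) (hC _))
      rw [norm_mul, Complex.norm_natCast] at this
      linarith
    intro k
    have := h2 k
    rw [h4, sub_eq_zero] at this
    exact this

lemma trace_const [IsAlgClosed E] [CharZero E] {d : ℕ} (u s : Matrix (Fin d) (Fin d) E)
    (hu : IsNilpotent (u - 1))
    (h : ∀ k : ℕ, ∀ x ∈ (u ^ k * s).charpoly.roots, ∃ m : ℕ, 0 < m ∧ x ^ m = 1) :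
    (u * s).trace = s.trace := by
  let F := algebraicClosure ℚ E
  have : Algebra.IsAlgebraic ℚ F := algebraicClosure.isAlgebraic ℚ E
  let σ : F →ₐ[ℚ] ℂ := IsAlgClosed.lift
  have hF : ∀ M : Multiset E, (∀ x ∈ M, ∃ m : ℕ, 0 < m ∧ x ^ m = 1) →
      ∃ y : F, (y : E) = M.sum ∧ ‖σ y‖ ≤ Multiset.card M := by
    intro M
    induction M using Multiset.induction_on with
    | empty => intro _; exact ⟨0, by simp⟩
    | cons a s ih =>
      intro h
      obtain ⟨y, hy, hy'⟩ := ih fun x hx => h x (Multiset.mem_cons_of_mem hx)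
      obtain ⟨m, hm, hm'⟩ := h a (Multiset.mem_cons_self a s)
      have ha : a ∈ F := by
        rw [mem_algebraicClosure_iff]
        refine IsIntegral.isAlgebraic (IsIntegral.of_pow hm ?_)
        rw [hm']; exact isIntegral_one
      have hz : (⟨a, ha⟩ : F) ^ m = 1 := by
        apply Subtype.ext; simpa using hm'
      refine ⟨⟨a, ha⟩ + y, by simp [hy], ?_⟩
      rw [map_add, Multiset.card_cons]
      have h1 : ‖σ ⟨a, ha⟩‖ = 1 := by
        refine Complex.norm_eq_one_of_pow_eq_one (n := m) ?_ hm.ne'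
        rw [← map_pow, hz, map_one]
      push_cast
      refine (norm_add_le _ _).trans ?_
      rw [h1]; linarith
  choose y hy hy' using fun k => hF _ (h k)
  have hy2 : ∀ k, (y k : E) = (u ^ k * s).trace := by
    intro k; rw [hy, ← Matrix.trace_eq_sum_roots_charpoly]
  obtain ⟨D, hD⟩ := hu
  have hdiff : ∀ j k : ℕ, (((fwdDiff 1)^[j] y k : F) : E) = (u ^ k * (u - 1) ^ j * s).trace := by
    intro j
    induction j with
    | zero => intro k; simp [hy2]
    | succ j ih =>
      intro k
      rw [Function.iterate_succ_apply', fwdDiff, AddSubgroupClass.coe_sub, ih, ih, ← Matrix.trace_sub,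
        ← sub_mul, ← sub_mul, pow_succ u k, pow_succ' (u - 1) j]
      congr 2
      noncomm_ring
  have hdσ : ∀ j k : ℕ, (fwdDiff 1)^[j] (fun k => σ (y k)) k = σ ((fwdDiff 1)^[j] y k) := by
    intro j
    induction j with
    | zero => intro k; simp
    | succ j ih =>
      intro k
      rw [Function.iterate_succ_apply', Function.iterate_succ_apply', fwdDiff, fwdDiff, ih, ih, map_sub]
  have := bounded_const D (fun k => σ (y k)) ⟨d, fun k => by
      refine (hy' k).trans ?_
      have := (u ^ k * s).charpoly.card_roots'
      rw [Matrix.charpoly_natDegree_eq_dim, Fintype.card_fin] at this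
      exact_mod_cast this⟩ (by
      ext k
      rw [hdσ]
      have : (fwdDiff 1)^[D + 1] y k = 0 := by
        apply Subtype.ext
        rw [hdiff, pow_succ, hD]; simp
      rw [this]; simp) 0
  have h2 := σ.toRingHom.injective this
  have h3 := congrArg (Subtype.val) h2
  rw [hy2, hy2] at h3
  simpa using h3

lemma nilp_of_trace [CharZero E] {d : ℕ} (r : Matrix (Fin d) (Fin d) E)
    (h : ∀ p : E[X], (r * aeval r p).trace = 0) : IsNilpotent r := by
  have h0 : r.charpoly ≠ 0 := r.charpoly_monic.ne_zero
  obtain ⟨q, hq, hq'⟩ := exists_eq_pow_rootMultiplicity_mul_and_not_dvd r.charpoly h0 0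
  set a := r.charpoly.rootMultiplicity 0
  rw [C_0, sub_zero] at hq hq'
  have hcop : IsCoprime ((X : E[X]) ^ (a + 1)) q :=
    IsCoprime.pow_left ((irreducible_X.coprime_iff_not_dvd).2 hq')
  obtain ⟨s, t, hst⟩ := hcop
  set e := aeval r (s * X ^ (a + 1)) with he
  have hz : aeval r (X ^ a * q) = 0 := by rw [← hq, Matrix.aeval_self_charpoly]
  have he1 : e + aeval r (t * q) = 1 := by rw [he, ← map_add, hst, map_one]
  have hid : IsIdempotentElem e := by
    have : e * aeval r (t * q) = 0 := by
      rw [he, ← map_mul, show s * X ^ (a + 1) * (t * q) = s * t * X * (X ^ a * q) by ring, map_mul, hz,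
        mul_zero]
    calc e * e = e * (e + aeval r (t * q)) := by rw [mul_add, this, add_zero]
      _ = e := by rw [he1, mul_one]
  have htr : e.trace = 0 := by
    rw [he, show s * X ^ (a + 1) = X * (s * X ^ a) by ring, map_mul, aeval_X]
    exact h _
  have he0 : e = 0 := by
    have hid' : IsIdempotentElem (Matrix.toLin' e) := by
      have := hid.map (Matrix.toLinAlgEquiv' (R := E) (n := Fin d))
      exact this
    have := LinearMap.IsIdempotentElem.eq_zero_of_trace_eq_zero hid' (by
      rw [Matrix.trace_toLin'_eq]; exact htr)
    exact (Matrix.toLin' (R := E)).injective (by rw [this, map_zero])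
  rw [he0, zero_add] at he1
  refine ⟨a, ?_⟩
  calc r ^ a = r ^ a * aeval r (t * q) := by rw [he1, mul_one]
    _ = aeval r (t * (X ^ a * q)) := by
      rw [show t * (X ^ a * q) = X ^ a * (t * q) by ring, map_mul _ (X ^ a), map_pow, aeval_X]
    _ = 0 := by rw [map_mul, hz, mul_zero]

/-- iterated commutators -/
def eng {Γ : Type*} [Group Γ] (u v : Γ) : ℕ → Γ
  | 0 => u * v⁻¹
  | k + 1 => eng u v k * v * (eng u v k)⁻¹ * v⁻¹

theorem engel [IsAlgClosed E] [CharZero E] {d : ℕ} {Γ : Type*} [Group Γ]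
    (ρ : Γ →* Matrix.GeneralLinearGroup (Fin d) E)
    (h : ∀ g, ∀ x ∈ (ρ g).val.charpoly.roots, ∃ m : ℕ, 0 < m ∧ x ^ m = 1)
    (u v : Γ) (hu : IsNilpotent ((ρ u).val - 1)) (hv : IsNilpotent ((ρ v).val - 1)) :
    ∃ k, ρ (eng u v k) = 1 := by
  have tr1 : ∀ u : Γ, IsNilpotent ((ρ u).val - 1) → ∀ s, (ρ (u * s)).val.trace = (ρ s).val.trace := by
    intro u hu s
    rw [map_mul, Units.val_mul]
    apply trace_const _ _ hu
    intro k
    have := h (u ^ k * s)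
    simpa using this
  let Δ : Subgroup Γ := Subgroup.closure {u, v}
  have tr2 : ∀ g ∈ Δ, ∀ s, (ρ (g * s)).val.trace = (ρ s).val.trace := by
    intro g hg
    induction hg using Subgroup.closure_induction with
    | mem x hx =>
      rcases hx with rfl | hx
      · exact tr1 _ hu
      · rw [Set.mem_singleton_iff.1 hx]; exact tr1 _ hv
    | one => simp
    | mul x y _ _ hx hy => intro s; rw [mul_assoc, hx, hy]
    | inv x _ hx => intro s; have := hx (x⁻¹ * s); rw [mul_inv_cancel_left] at this; exact this.symm
  let Mo : Submonoid (Matrix (Fin d) (Fin d) E) :=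
    Δ.toSubmonoid.map ((Units.coeHom _).comp ρ)
  let S : Subalgebra E (Matrix (Fin d) (Fin d) E) := Algebra.adjoin E (Mo : Set _)
  have hS : ∀ s ∈ S, ∀ g ∈ Δ, (((ρ g).val - 1) * s).trace = 0 := by
    intro s hs g hg
    have hs' : s ∈ Subalgebra.toSubmodule S := hs
    rw [Algebra.adjoin_eq_span, Submonoid.closure_eq] at hs'
    clear hs
    induction hs' using Submodule.span_induction with
    | mem x hx =>
      obtain ⟨y, hy, rfl⟩ := hx
      have := tr2 g hg y
      simp only [map_mul, Units.val_mul] at this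
      simp [sub_mul, this]
    | zero => simp
    | add x y hx hy hx' hy' => rw [mul_add, Matrix.trace_add, hx', hy', add_zero]
    | smul a x hx hx' => rw [mul_smul_comm, Matrix.trace_smul, hx', smul_zero]
  have hmem : ∀ g ∈ Δ, (ρ g).val ∈ S := fun g hg => Algebra.subset_adjoin ⟨g, hg, rfl⟩
  have hfin : IsArtinianRing S := IsArtinianRing.of_finite E S
  let J : Ideal S := Ideal.jacobson ⊥
  have hJ : ∀ g (hg : g ∈ Δ), (⟨(ρ g).val, hmem g hg⟩ - 1 : S) ∈ J := by
    intro g hg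
    rw [Ideal.mem_jacobson_iff]
    intro y
    set x : S := ⟨(ρ g).val, hmem g hg⟩ - 1 with hx
    have hxv : (x : Matrix (Fin d) (Fin d) E) = (ρ g).val - 1 := rfl
    have hn : IsNilpotent ((y * x : S) : Matrix (Fin d) (Fin d) E) := by
      apply nilp_of_trace
      intro p
      have hp : aeval ((y * x : S) : Matrix (Fin d) (Fin d) E) p = ((aeval (y * x) p : S) : Matrix (Fin d) (Fin d) E) := by
        exact aeval_algHom_apply S.val (y * x) p
      rw [hp]
      have := hS _ ((aeval (y * x) p) * y).2 g hg
      rw [← hxv] at this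
      rw [← this]
      push_cast
      rw [← mul_assoc, Matrix.trace_mul_comm _ (y : Matrix (Fin d) (Fin d) E), mul_assoc]
    have hn' : IsNilpotent (y * x) := by
      obtain ⟨k, hk⟩ := hn
      exact ⟨k, Subtype.ext (by simpa using hk)⟩
    obtain ⟨z, hz⟩ := hn'.isUnit_add_one
    refine ⟨(z⁻¹ : Sˣ), ?_⟩
    have : (z⁻¹ : Sˣ).val * y * x + (z⁻¹ : Sˣ).val - 1 = 0 := by
      rw [mul_assoc, ← mul_add_one, ← hz, Units.inv_mul, sub_self]
    rw [this]
    exact Submodule.zero_mem _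
  obtain ⟨N, hN⟩ : IsNilpotent J := IsArtinianRing.isNilpotent_jacobson_bot
  have huΔ : u ∈ Δ := Subgroup.subset_closure (by simp)
  have hvΔ : v ∈ Δ := Subgroup.subset_closure (by simp)
  have heΔ : ∀ k, eng u v k ∈ Δ := by
    intro k
    induction k with
    | zero => exact Δ.mul_mem huΔ (Δ.inv_mem hvΔ)
    | succ k ih => exact Δ.mul_mem (Δ.mul_mem (Δ.mul_mem ih hvΔ) (Δ.inv_mem ih)) (Δ.inv_mem hvΔ)
  have hmain : ∀ k, (⟨(ρ (eng u v k)).val, hmem _ (heΔ k)⟩ - 1 : S) ∈ J ^ (k + 1) := by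
    intro k
    induction k with
    | zero => rw [zero_add, Submodule.pow_one]; exact hJ _ (heΔ 0)
    | succ k ih =>
      set a : S := ⟨(ρ (eng u v k)).val, hmem _ (heΔ k)⟩ with ha
      let b : S := ⟨(ρ v).val, hmem _ hvΔ⟩
      let c : S := ⟨(ρ ((eng u v k)⁻¹ * v⁻¹)).val, hmem _ (Δ.mul_mem (Δ.inv_mem (heΔ k)) (Δ.inv_mem hvΔ))⟩
      have e : (⟨(ρ (eng u v (k + 1))).val, hmem _ (heΔ (k + 1))⟩ - 1 : S) =
          ((a - 1) * (b - 1) - (b - 1) * (a - 1)) * c := by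
        have e1 : ((a - 1) * (b - 1) - (b - 1) * (a - 1)) = a * b - b * a := by
          simp only [sub_mul, mul_sub, mul_one, one_mul]; abel
        rw [e1, sub_mul]
        have e2 : a * b * c = ⟨(ρ (eng u v (k + 1))).val, hmem _ (heΔ (k + 1))⟩ := by
          apply Subtype.ext
          simp [a, b, c, eng, mul_assoc]
        have e3 : b * a * c = 1 := by
          apply Subtype.ext
          have : v * eng u v k * ((eng u v k)⁻¹ * v⁻¹) = 1 := by group
          change (ρ v).val * (ρ (eng u v k)).val * (ρ ((eng u v k)⁻¹ * v⁻¹)).val = 1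
          rw [← Units.val_mul, ← Units.val_mul, ← map_mul, ← map_mul, this, map_one, Units.val_one]
        rw [e2, e3]
      rw [e]
      apply Ideal.mul_mem_right
      apply Submodule.sub_mem
      · rw [Submodule.pow_succ]
        exact Ideal.mul_mem_mul ih (hJ _ hvΔ)
      · rw [Ideal.IsTwoSided.pow_succ]
        exact Ideal.mul_mem_mul (hJ _ hvΔ) ih
  refine ⟨N, ?_⟩
  have h1 := Ideal.pow_le_pow_right (Nat.le_succ N) (hmain N)
  rw [hN] at h1
  have h2 := congrArg Subtype.val ((Submodule.mem_bot S).1 h1)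
  apply Units.ext
  simpa [sub_eq_zero] using h2
end part2
end NL

namespace NL
open Module Polynomial

section part3

/-- the endomorphism sending the letter `z` to `z * w` -/
noncomputable def tv {α : Type*} [DecidableEq α] (z : α) (w : FreeGroup α) : FreeGroup α →* FreeGroup α :=
  FreeGroup.lift fun i => if i = z then FreeGroup.of z * w else FreeGroup.of i

variable {n : ℕ} (hn : 3 ≤ n)

noncomputable def io : FreeGroup (Fin 2) →* FreeGroup (Fin n) :=
  FreeGroup.map (Fin.castLE (by omega))

def zz : Fin n := ⟨2, by omega⟩

lemma zz_ne (i : Fin 2) : Fin.castLE (by omega : 2 ≤ n) i ≠ zz hn := by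
  intro h
  have := congrArg Fin.val h
  simp [zz] at this
  omega

lemma tv_io (w) (g) : tv (zz hn) w (io hn g) = io hn g := by
  have : (tv (zz hn) w).comp (io hn) = io hn := by
    ext i
    simp [tv, io, zz_ne]
  exact DFunLike.congr_fun this g

lemma tv_comp (g h) : (tv (zz hn) (io hn g)).comp (tv (zz hn) (io hn h)) = tv (zz hn) (io hn (g * h)) := by
  ext i
  by_cases hi : i = zz hn
  · subst hi
    have := tv_io hn (io hn g) h
    simp [tv] at this ⊢
    rw [this, mul_assoc]
  · simp [tv, hi]

lemma tv_one : tv (zz hn) (io hn 1) = MonoidHom.id _ := by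
  ext i
  by_cases hi : i = zz hn
  · subst hi
    simp [tv]
  · simp [tv, hi]

lemma tv_tv (g h) (x) : tv (zz hn) (io hn g) (tv (zz hn) (io hn h) x) = tv (zz hn) (io hn (g * h)) x := 
  DFunLike.congr_fun (tv_comp hn g h) x

noncomputable def ph : FreeGroup (Fin 2) →* MulAut (FreeGroup (Fin n)) where
  toFun g := 
    { toFun := tv (zz hn) (io hn g)
      invFun := tv (zz hn) (io hn g⁻¹)
      left_inv := fun x => by rw [tv_tv, inv_mul_cancel, tv_one]; rfl
      right_inv := fun x => by rw [tv_tv, mul_inv_cancel, tv_one]; rfl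
      map_mul' := fun x y => map_mul _ x y }
  map_one' := by
    ext x
    exact DFunLike.congr_fun (tv_one hn) x
  map_mul' g h := by
    ext x
    exact (tv_tv hn g h x).symm

lemma ph_apply (g) (x) : ph hn g x = tv (zz hn) (io hn g) x := rfl

lemma ph_io (g h) : ph hn g (io hn h) = io hn h := tv_io hn _ _

lemma ph_zz (g) : ph hn g (FreeGroup.of (zz hn)) = FreeGroup.of (zz hn) * io hn g := by
  rw [ph_apply]; simp [tv]

lemma aut_conj (φ : MulAut (FreeGroup (Fin n))) (w) : φ * MulAut.conj w = MulAut.conj (φ w) * φ := by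
  ext x
  simp

lemma ph_comm (g h) : Commute (MulAut.conj (io hn g)) (ph hn h) := by
  have := aut_conj (ph hn h) (io hn g)
  rw [ph_io] at this
  exact this.symm

lemma ph_conj (g) : (MulAut.conj (FreeGroup.of (zz hn)))⁻¹ * ph hn g * MulAut.conj (FreeGroup.of (zz hn))
    = MulAut.conj (io hn g) * ph hn g := by
  rw [mul_assoc, aut_conj, ph_zz, map_mul, mul_assoc, inv_mul_cancel_left]

def mX : Matrix.GeneralLinearGroup (Fin 2) ℚ where
  val := !![2, 0; 0, 1]
  inv := !![1/2, 0; 0, 1]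
  val_inv := by ext i j; fin_cases i <;> fin_cases j <;> simp [Matrix.mul_apply]
  inv_val := by ext i j; fin_cases i <;> fin_cases j <;> simp [Matrix.mul_apply]

def mY : Matrix.GeneralLinearGroup (Fin 2) ℚ where
  val := !![0, 1; 1, 1]
  inv := !![-1, 1; 1, 0]
  val_inv := by ext i j; fin_cases i <;> fin_cases j <;> simp [Matrix.mul_apply]
  inv_val := by ext i j; fin_cases i <;> fin_cases j <;> simp [Matrix.mul_apply]

noncomputable def fe (n : ℕ) : FreeGroup (Fin n) →* Matrix.GeneralLinearGroup (Fin 2) ℚ :=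
  FreeGroup.lift fun i => if i.val = 0 then mX else if i.val = 1 then mY else 1

noncomputable def ff : FreeGroup (Fin 2) →* Matrix.GeneralLinearGroup (Fin 2) ℚ :=
  FreeGroup.lift fun i => if i.val = 0 then mX else if i.val = 1 then mY else 1

lemma fe_io (g) : fe n (io hn g) = ff g := by
  have : (fe n).comp (io hn) = ff := by
    ext1 i
    simp [fe, ff, io]
  exact DFunLike.congr_fun this g

lemma central_entry (w : FreeGroup (Fin 2)) (h : MulAut.conj (io hn w) = 1) :
    (ff w).val 1 0 = 0 := by
  have h1 := DFunLike.congr_fun h (io hn (FreeGroup.of 0))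
  rw [MulAut.conj_apply, MulAut.one_apply, mul_inv_eq_iff_eq_mul] at h1
  have h2 := congrArg (fe n) h1
  rw [map_mul, map_mul, fe_io, fe_io] at h2
  have h3 : ff (FreeGroup.of 0) = mX := by simp [ff]
  rw [h3] at h2
  have h4 := congrArg (fun M : Matrix.GeneralLinearGroup (Fin 2) ℚ => M.val 1 0) h2
  simp [mX, Matrix.mul_apply] at h4
  linarith

noncomputable def hh : FreeGroup (Fin 2) :=
  FreeGroup.of 0 * FreeGroup.of 1 * (FreeGroup.of 0)⁻¹ * (FreeGroup.of 1)⁻¹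

noncomputable def gg : FreeGroup (Fin 2) :=
  FreeGroup.of 0 * hh * (FreeGroup.of 0)⁻¹

lemma ff_hh : (ff hh).val = !![2, 0; 1/2, 1/2] := by
  have h0 : ff (FreeGroup.of 0) = mX := by simp [ff]
  have h1 : ff (FreeGroup.of 1) = mY := by simp [ff]
  simp only [hh, map_mul, map_inv, h0, h1, Units.val_mul]
  change !![2, 0; 0, 1] * !![0, 1; 1, 1] * !![1/2, 0; 0, 1] * !![-1, 1; 1, 0] = _
  ext i j; fin_cases i <;> fin_cases j <;> simp [Matrix.mul_apply] <;> norm_num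

lemma ff_hhp (m : ℕ) : (ff (hh ^ m)).val =
    !![2 ^ m, 0; (2 ^ m - (1/2) ^ m) / 3, (1/2) ^ m] := by
  induction m with
  | zero => simp [Matrix.one_fin_two]
  | succ m ih =>
    rw [pow_succ, map_mul, Units.val_mul, ih, ff_hh]
    ext i j; fin_cases i <;> fin_cases j <;> simp [Matrix.mul_apply, pow_succ] <;> ring

lemma gg_pow (m : ℕ) : gg ^ m = FreeGroup.of 0 * hh ^ m * (FreeGroup.of 0)⁻¹ := by
  rw [gg, conj_pow]

lemma ff_ggp (m : ℕ) : (ff (gg ^ m)).val =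
    !![2 ^ m, 0; (2 ^ m - (1/2) ^ m) / 6, (1/2) ^ m] := by
  have h0 : ff (FreeGroup.of 0) = mX := by simp [ff]
  rw [gg_pow, map_mul, map_mul, map_inv, h0, Units.val_mul, Units.val_mul, ff_hhp]
  change !![2, 0; 0, 1] * _ * !![1/2, 0; 0, 1] = _
  ext i j; fin_cases i <;> fin_cases j <;> simp [Matrix.mul_apply] <;> ring

lemma pow_ne (m : ℕ) (hm : 0 < m) : (1 : ℚ) < 2 ^ m ∧ (1/2 : ℚ) ^ m < 1 :=
  ⟨one_lt_pow₀ (by norm_num) hm.ne', pow_lt_one₀ (by norm_num) (by norm_num) hm.ne'⟩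

lemma eng_entry (m : ℕ) (hm : 0 < m) (k : ℕ) :
    ∃ t : ℚ, t ≠ 0 ∧ (ff (eng (hh ^ m) (gg ^ m) k)).val = !![1, 0; t, 1] := by
  obtain ⟨h1, h2⟩ := pow_ne m hm
  have hpq : (2 : ℚ) ^ m * (1/2) ^ m = 1 := by rw [← mul_pow]; norm_num
  have hv := ff_ggp m
  induction k with
  | zero =>
    refine ⟨(2 ^ m - (1/2) ^ m) / 6 * (1/2) ^ m, ?_, ?_⟩
    · apply mul_ne_zero
      · apply div_ne_zero <;> linarith
      · positivity
    · rw [eng, map_mul, map_inv, Units.val_mul, Units.mul_inv_eq_iff_eq_mul, ff_hhp, hv]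
      ext i j; fin_cases i <;> fin_cases j <;> simp [Matrix.mul_apply] <;> ring
  | succ k ih =>
    obtain ⟨t, ht, he⟩ := ih
    refine ⟨t * (1 - (1/2) ^ m * (1/2) ^ m), ?_, ?_⟩
    · apply mul_ne_zero ht
      have : (0 : ℚ) < (1/2) ^ m := by positivity
      nlinarith
    · rw [eng, map_mul, map_inv, Units.val_mul, Units.mul_inv_eq_iff_eq_mul, map_mul, map_inv, Units.val_mul, Units.mul_inv_eq_iff_eq_mul, map_mul, Units.val_mul, he, hv]
      clear hv he
      generalize ((1/2 : ℚ)) ^ m = q at *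
      generalize (2 : ℚ) ^ m = p at *
      ext i j; fin_cases i <;> fin_cases j <;> simp [Matrix.mul_apply]
      linear_combination (t * q) * hpq

lemma hhp_entry (m : ℕ) (hm : 0 < m) : (ff (hh ^ m)).val 1 0 ≠ 0 := by
  obtain ⟨h1, h2⟩ := pow_ne m hm
  rw [ff_hhp]
  have : (2 ^ m - (1/2 : ℚ) ^ m) / 3 ≠ 0 := by apply div_ne_zero <;> linarith
  simpa using this

lemma hh_mem : hh ∈ commutator (FreeGroup (Fin 2)) :=
  Subgroup.commutator_mem_commutator (Subgroup.mem_top _) (Subgroup.mem_top _)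

lemma gg_mem : gg ∈ commutator (FreeGroup (Fin 2)) :=
  (inferInstance : (commutator (FreeGroup (Fin 2))).Normal).conj_mem _ hh_mem _

end part3
end NL

namespace NL

theorem main {n : ℕ} (hn : 3 ≤ n) {E : Type*} [Field E] [IsAlgClosed E] {d : ℕ}
    (R : MulAut (FreeGroup (Fin n)) →* Matrix.GeneralLinearGroup (Fin d) E)
    (hR : Function.Injective R) : False := by
  let A : FreeGroup (Fin 2) →* Matrix.GeneralLinearGroup (Fin d) E :=
    (R.comp MulAut.conj).comp (io hn)
  let B : FreeGroup (Fin 2) →* Matrix.GeneralLinearGroup (Fin d) E := R.comp (ph hn)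
  have htor := torsion_roots A B (R (MulAut.conj (FreeGroup.of (zz hn))))
    (fun g h => (ph_comm hn g h).map R)
    (fun g => by
      have := congrArg R (ph_conj hn g)
      rw [map_mul, map_mul, map_mul, map_inv] at this
      exact this)
  have hA : ∀ w, A w = 1 → (ff w).val 1 0 = 0 := by
    intro w hw
    apply central_entry hn
    apply hR
    rw [map_one]
    exact hw
  obtain ⟨m, hm, hnil⟩ := exists_unip (A hh).val (htor hh hh_mem)
  rcases CharP.exists' E with h0 | ⟨p, hp, hchar⟩
  · let Γ := commutator (FreeGroup (Fin 2))
    let u : Γ := ⟨hh ^ m, Γ.pow_mem hh_mem m⟩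
    let v : Γ := ⟨gg ^ m, Γ.pow_mem gg_mem m⟩
    have hv : IsNilpotent ((A (gg ^ m)).val - 1) := by
      obtain ⟨k, hk⟩ := hnil
      refine ⟨k, ?_⟩
      have e : (A (gg ^ m)).val - 1 = (A (FreeGroup.of 0)).val * ((A hh).val ^ m - 1) *
          ((A (FreeGroup.of 0))⁻¹).val := by
        rw [gg_pow, map_mul, map_mul, map_inv, map_pow, mul_sub, sub_mul]
        simp
      rw [e, Units.conj_pow, hk, mul_zero, zero_mul]
    obtain ⟨k, hk⟩ := engel (A.comp Γ.subtype) (fun g => htor g g.2) u v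
      (by
        change IsNilpotent ((A (hh ^ m)).val - 1)
        rw [map_pow, Units.val_pow_eq_pow_val]; exact hnil) hv
    have hval : ∀ k, ((eng u v k : Γ) : FreeGroup (Fin 2)) = eng (hh ^ m) (gg ^ m) k := by
      intro k
      induction k with
      | zero => rfl
      | succ k ih => simp [eng, ih, u, v]
    have h1 := hA _ hk
    rw [Subgroup.coe_subtype, hval] at h1
    obtain ⟨t, ht, he⟩ := eng_entry m hm k
    rw [he] at h1
    exact ht (by simpa using h1)
  · obtain ⟨k, hk⟩ := hnil
    have hp' : Fact p.Prime := hp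
    refine hhp_entry (m * p ^ k) (Nat.mul_pos hm (pow_pos hp.out.pos _)) (hA _ ?_)
    apply Units.ext
    rw [map_pow, Units.val_pow_eq_pow_val, Units.val_one, pow_mul]
    rcases isEmpty_or_nonempty (Fin d) with hd | hd
    · exact Subsingleton.elim _ _
    have : CharP (Matrix (Fin d) (Fin d) E) p := inferInstance
    have h2 := sub_pow_char_pow_of_commute p k (Commute.one_right ((A hh).val ^ m))
    rw [one_pow, pow_eq_zero_of_le (Nat.lt_pow_self hp.out.one_lt).le hk] at h2
    exact sub_eq_zero.1 h2.symm

end NL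

/-- For `n ≥ 3`, every group `H` containing `Aut(F_n)` is not
linear: for every field `K` and every `d : ℕ`, there is no injective group
homomorphism `H →* GL_d(K)`. -/
theorem not_linear_of_contains_aut_free {n : ℕ} (hn : 3 ≤ n)
    (H : Type*) [Group H]
    (hH : ∃ j : MulAut (FreeGroup (Fin n)) →* H, Function.Injective j) :
    ∀ (K : Type*) [Field K] (d : ℕ),
      ¬ ∃ f : H →* Matrix.GeneralLinearGroup (Fin d) K, Function.Injective f := by
  intro K _ d ⟨f, hf⟩
  obtain ⟨j, hj⟩ := hH
  refine NL.main hn (((Matrix.GeneralLinearGroup.map (n := Fin d)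
    (algebraMap K (AlgebraicClosure K))).comp f).comp j) ?_
  intro M N hMN
  apply hj
  apply hf
  apply Units.ext
  ext a b
  have := congrArg (fun M : Matrix.GeneralLinearGroup (Fin d) (AlgebraicClosure K) => M.val a b) hMN
  exact (algebraMap K (AlgebraicClosure K)).injective this
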